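/- Let (Θ,I,p) be a statistical model, q ∈ P_+(I), κ ∈ ℝ, and suppose the covariant Hessian bound H_W(θ) = ∇²_θ D_KL(p(θ)‖q) − Σ_k (∂_{θ_k}D_KL(p(θ)‖q))·Γ^{W,k}(θ) ⪰ κ G_W(θ) holds for all θ ∈ Θ. Let θ_t, t ∈ [0,1], be a constant-speed geodesic of G_W with g_W(θ̇_t, θ̇_t) = d_W(θ_0,θ_1)² for all t. Then ∫₀¹ (1−t) · (d²/dt²) D_KL(p(θ_t)‖q) dt ≥ (κ/2) · d_W(θ_0,θ_1)², and hence by second-order Taylor expansion D_KL(p(θ_1)‖q) ≥ D_KL(p(θ_0)‖q) + (d/dt)|_{t=0} D_KL(p(θ_t)‖q) + (κ/2) d_W(θ_0,θ_1)². -/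

import Mathlib

open Matrix Set

namespace StatRicci

noncomputable section

open scoped Classical in
/-- The Moore–Penrose pseudoinverse of a square real matrix, characterized by the
four Penrose conditions. -/
def mpinv {k : Type*} [Fintype k] [DecidableEq k] (A : Matrix k k ℝ) : Matrix k k ℝ :=
  if h : ∃ B : Matrix k k ℝ,
      A * B * A = A ∧ B * A * B = B ∧ (A * B)ᵀ = A * B ∧ (B * A)ᵀ = B * A
  then h.choose else 0

/-- `q` is a strictly positive probability vector: `q ∈ P₊(I)`. -/
def posProb {n : ℕ} (q : Fin n → ℝ) : Prop :=
  (∀ i, 0 < q i) ∧ ∑ i, q i = 1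

/-- `ω` is a symmetric nonnegative weight matrix with zero diagonal:
`ω i j = ω j i > 0` on edges and `ω i j = 0` otherwise. -/
def isWeight {n : ℕ} (ω : Fin n → Fin n → ℝ) : Prop :=
  (∀ i j, ω i j = ω j i) ∧ (∀ i j, 0 ≤ ω i j) ∧ ∀ i, ω i i = 0

/-- The graph on `I` with edge set `{(i,j) : ω i j > 0}` is connected. -/
def isConn {n : ℕ} (ω : Fin n → Fin n → ℝ) : Prop :=
  (SimpleGraph.fromRel fun i j => 0 < ω i j).Connected

/-- Normalized volume form `d_i`. -/
def dvol {n : ℕ} (ω : Fin n → Fin n → ℝ) (i : Fin n) : ℝ :=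
  (∑ j, ω i j) / ∑ k, ∑ j, ω k j

/-- Edge weight `Λ(p)_{(i,j),(i,j)} = ((p i)/d_i + (p j)/d_j)/2`. -/
def lamW {n : ℕ} (ω : Fin n → Fin n → ℝ) (p : Fin n → ℝ) (i j : Fin n) : ℝ :=
  (p i / dvol ω i + p j / dvol ω j) / 2

/-- The weighted Laplacian `L(p) = Dᵀ Λ(p) D`, written entrywise as a sum over edges
(each unordered edge `(i,j)` counted once, with `j < i`; non-edges contribute `0`
since `ω i j = 0` there). -/
def Lap {n : ℕ} (ω : Fin n → Fin n → ℝ) (p : Fin n → ℝ) : Matrix (Fin n) (Fin n) ℝ :=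
  Matrix.of fun k l => ∑ i, ∑ j,
    if j < i then
      ω i j * lamW ω p i j *
        (((if k = i then (1 : ℝ) else 0) - if k = j then 1 else 0) *
          ((if l = i then (1 : ℝ) else 0) - if l = j then 1 else 0))
    else 0

/-- Partial derivative `∂_{θ_a} f (θ)`. -/
def pd {d : ℕ} (f : (Fin d → ℝ) → ℝ) (a : Fin d) (θ : Fin d → ℝ) : ℝ :=
  fderiv ℝ f θ (Pi.single a 1)

/-- Euclidean gradient `∇_θ f (θ)`. -/
def grad {d : ℕ} (f : (Fin d → ℝ) → ℝ) (θ : Fin d → ℝ) : Fin d → ℝ :=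
  fun a => pd f a θ

/-- Euclidean Hessian `∇²_θ f (θ)`. -/
def hess {d : ℕ} (f : (Fin d → ℝ) → ℝ) (θ : Fin d → ℝ) : Matrix (Fin d) (Fin d) ℝ :=
  Matrix.of fun a b => pd (pd f b) a θ

/-- Jacobian matrix `J_θ p(θ) ∈ ℝ^{n×d}`. -/
def Jac {n d : ℕ} (p : (Fin d → ℝ) → Fin n → ℝ) (θ : Fin d → ℝ) :
    Matrix (Fin n) (Fin d) ℝ :=
  Matrix.of fun i a => pd (fun x => p x i) a θ

/-- The Kullback–Leibler divergence `D_KL(p‖q)`. -/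
def KLdiv {n : ℕ} (p q : Fin n → ℝ) : ℝ :=
  ∑ i, p i * Real.log (p i / q i)

/-- Wasserstein metric tensor `G_W(θ) = J_θp(θ)ᵀ L(p(θ))† J_θp(θ)`. -/
def GW {n d : ℕ} (ω : Fin n → Fin n → ℝ) (p : (Fin d → ℝ) → Fin n → ℝ)
    (θ : Fin d → ℝ) : Matrix (Fin d) (Fin d) ℝ :=
  (Jac p θ)ᵀ * mpinv (Lap ω (p θ)) * Jac p θ

/-- Fisher–Rao metric tensor `G_F(θ)`. -/
def GF {n d : ℕ} (p : (Fin d → ℝ) → Fin n → ℝ) (θ : Fin d → ℝ) :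
    Matrix (Fin d) (Fin d) ℝ :=
  Matrix.of fun a b => ∑ i, (1 / p θ i) * pd (fun x => p x i) a θ * pd (fun x => p x i) b θ

/-- Christoffel symbol matrices `Γ^{W,k}(θ)` of `G_W`. -/
def Christoffel {n d : ℕ} (ω : Fin n → Fin n → ℝ) (p : (Fin d → ℝ) → Fin n → ℝ)
    (k : Fin d) (θ : Fin d → ℝ) : Matrix (Fin d) (Fin d) ℝ :=
  Matrix.of fun i j => (1 / 2) * ∑ l,
    (GW ω p θ)⁻¹ k l *
      (pd (fun x => GW ω p x j l) i θ + pd (fun x => GW ω p x i l) j θ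
        - pd (fun x => GW ω p x i j) l θ)

/-- Loewner-type ordering via quadratic forms: `matGE A B` means `A ⪰ B`. -/
def matGE {d : ℕ} (A B : Matrix (Fin d) (Fin d) ℝ) : Prop :=
  ∀ x : Fin d → ℝ, x ⬝ᵥ B.mulVec x ≤ x ⬝ᵥ A.mulVec x

/-- `γ` is a constant-speed geodesic of `(Θ, g_W)` with values in `S` on `[0,1]`. -/
def IsGeodesicOn {n d : ℕ} (ω : Fin n → Fin n → ℝ) (p : (Fin d → ℝ) → Fin n → ℝ)
    (S : Set (Fin d → ℝ)) (γ : ℝ → Fin d → ℝ) : Prop :=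
  ContDiff ℝ 2 γ ∧ (∀ t ∈ Icc (0 : ℝ) 1, γ t ∈ S) ∧
    ∀ t ∈ Icc (0 : ℝ) 1, ∀ k,
      deriv (fun s => deriv γ s k) t
        + ∑ i, ∑ j, Christoffel ω p k (γ t) i j * deriv γ t i * deriv γ t j = 0

/-- Squared Wasserstein distance `d_W(θ₀,θ₁)²` on parameter space. -/
def dW2 {n d : ℕ} (ω : Fin n → Fin n → ℝ) (p : (Fin d → ℝ) → Fin n → ℝ)
    (S : Set (Fin d → ℝ)) (θ0 θ1 : Fin d → ℝ) : ℝ :=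
  sInf {E : ℝ | ∃ γ : ℝ → Fin d → ℝ, ContDiff ℝ 1 γ ∧ (∀ t ∈ Icc (0 : ℝ) 1, γ t ∈ S) ∧
    γ 0 = θ0 ∧ γ 1 = θ1 ∧
    E = ∫ t in (0 : ℝ)..1, deriv γ t ⬝ᵥ (GW ω p (γ t)).mulVec (deriv γ t)}

/-- `Ric(Θ,I,p) ≥ κ`: geodesic `κ`-convexity of the KL divergence. -/
def RicGE {n d : ℕ} (ω : Fin n → Fin n → ℝ) (p : (Fin d → ℝ) → Fin n → ℝ)
    (S : Set (Fin d → ℝ)) (q : Fin n → ℝ) (κ : ℝ) : Prop :=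
  ∀ γ : ℝ → Fin d → ℝ, IsGeodesicOn ω p S γ →
    ∀ t ∈ Icc (0 : ℝ) 1,
      KLdiv (p (γ t)) q ≤ (1 - t) * KLdiv (p (γ 0)) q + t * KLdiv (p (γ 1)) q
        - κ / 2 * t * (1 - t) * dW2 ω p S (γ 0) (γ 1)

/-- Relative Fisher information `I(p(θ)‖q)`. -/
def relFisher {n d : ℕ} (ω : Fin n → Fin n → ℝ) (p : (Fin d → ℝ) → Fin n → ℝ)
    (q : Fin n → ℝ) (θ : Fin d → ℝ) : ℝ :=
  grad (fun x => KLdiv (p x) q) θ ⬝ᵥ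
    ((GW ω p θ)⁻¹).mulVec (grad (fun x => KLdiv (p x) q) θ)

/-- The RIW matrix
`G_F(θ) + Σ_a ∇²_θ p_a(θ)·log(p_a(θ)/q_a) − Σ_k ∂_{θ_k}D_KL(p(θ)‖q)·Γ^{W,k}(θ)`. -/
def RIWmat {n d : ℕ} (ω : Fin n → Fin n → ℝ) (p : (Fin d → ℝ) → Fin n → ℝ)
    (q : Fin n → ℝ) (θ : Fin d → ℝ) : Matrix (Fin d) (Fin d) ℝ :=
  GF p θ + (∑ i, Real.log (p θ i / q i) • hess (fun x => p x i) θ)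
    - ∑ k, pd (fun x => KLdiv (p x) q) k θ • Christoffel ω p k θ

/-- The covariant (Wasserstein) Hessian `H_W(θ)` of the KL divergence. -/
def HW {n d : ℕ} (ω : Fin n → Fin n → ℝ) (p : (Fin d → ℝ) → Fin n → ℝ)
    (q : Fin n → ℝ) (θ : Fin d → ℝ) : Matrix (Fin d) (Fin d) ℝ :=
  hess (fun x => KLdiv (p x) q) θ
    - ∑ k, pd (fun x => KLdiv (p x) q) k θ • Christoffel ω p k θ

/-!
Write `F = D_KL(p(·) ‖ q)` and `f = F ∘ γ`. By the chain rule `f'' = D²F(γ̇, γ̇) + DF(γ̈)`, and the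
geodesic equation turns `DF(γ̈)` into `-∑ₖ ∂ₖF Γᵏ(γ̇, γ̇)`. So `f''` is the covariant Hessian of `F`
evaluated on the velocity, and the Hessian bound together with the constant speed gives
`f'' ≥ κ d_W²`. Integrating against the weight `1 - t` yields the first claim; that integral is the
remainder in Taylor's formula for `f` at `0`, which yields the second.
-/

section SecondDerivative

variable {𝕜 E F : Type*} [NontriviallyNormedField 𝕜]
  [NormedAddCommGroup E] [NormedSpace 𝕜 E] [NormedAddCommGroup F] [NormedSpace 𝕜 F]

theorem differentiableAt_fderiv {f : E → F} {x : E} (hf : ContDiffAt 𝕜 2 f x) :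
    DifferentiableAt 𝕜 (fderiv 𝕜 f) x :=
  (hf.fderiv_right (m := 1) (by norm_num)).differentiableAt one_ne_zero

theorem differentiableAt_deriv {γ : 𝕜 → E} {t : 𝕜} (hγ : ContDiffAt 𝕜 2 γ t) :
    DifferentiableAt 𝕜 (deriv γ) t :=
  (hγ.derivWithin (m := 1) (by norm_num)).differentiableAt one_ne_zero

theorem continuousAt_deriv_deriv {γ : 𝕜 → E} {t : 𝕜} (hγ : ContDiffAt 𝕜 2 γ t) :
    ContinuousAt (deriv (deriv γ)) t :=
  ((hγ.derivWithin (m := 1) (by norm_num)).derivWithin (m := 0) (by norm_num)).continuousAt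

theorem deriv_deriv_comp {f : E → F} {γ : 𝕜 → E} {t : 𝕜} (hf : ContDiffAt 𝕜 2 f (γ t))
    (hγ : ContDiffAt 𝕜 2 γ t) :
    deriv (deriv (f ∘ γ)) t =
      fderiv 𝕜 (fderiv 𝕜 f) (γ t) (deriv γ t) (deriv γ t) +
        fderiv 𝕜 f (γ t) (deriv (deriv γ) t) := by
  have hfirst : deriv (f ∘ γ) =ᶠ[nhds t] fun s => fderiv 𝕜 f (γ s) (deriv γ s) := by
    filter_upwards [hγ.eventually (by simp),
      hγ.continuousAt.eventually (hf.eventually (by simp))] with s hγs hfs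
    exact fderiv_comp_deriv s (hfs.differentiableAt two_ne_zero) (hγs.differentiableAt two_ne_zero)
  rw [hfirst.deriv_eq]
  exact (((differentiableAt_fderiv hf).hasFDerivAt.comp_hasDerivAt t
    (hγ.differentiableAt two_ne_zero).hasDerivAt).clm_apply
      (differentiableAt_deriv hγ).hasDerivAt).deriv

end SecondDerivative

section TaylorRemainder

variable {E : Type*} [NormedAddCommGroup E] [NormedSpace ℝ E] {f : ℝ → E} {a b : ℝ}

theorem intervalIntegrable_deriv_deriv (hf : ∀ t ∈ uIcc a b, ContDiffAt ℝ 2 f t) :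
    IntervalIntegrable (deriv (deriv f)) MeasureTheory.volume a b :=
  ContinuousOn.intervalIntegrable fun t ht =>
    (continuousAt_deriv_deriv (hf t ht)).continuousWithinAt

theorem integral_sub_smul_deriv_deriv [CompleteSpace E]
    (hf : ∀ t ∈ uIcc a b, ContDiffAt ℝ 2 f t) :
    ∫ t in a..b, (b - t) • deriv (deriv f) t = f b - f a - (b - a) • deriv f a := by
  have hf' : ∀ t ∈ uIcc a b, HasDerivAt (deriv f) (deriv (deriv f) t) t := fun t ht =>
    (differentiableAt_deriv (hf t ht)).hasDerivAt
  have hsub : ∀ t ∈ uIcc a b, HasDerivAt (fun s => b - s) (-1) t := fun t _ =>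
    (hasDerivAt_id t).const_sub b
  have hintegral_deriv : ∫ t in a..b, deriv f t = f b - f a :=
    intervalIntegral.integral_deriv_eq_sub
      (fun t ht => (hf t ht).differentiableAt two_ne_zero)
      (HasDerivAt.continuousOn hf').intervalIntegrable
  rw [intervalIntegral.integral_smul_deriv_eq_deriv_smul hsub hf' intervalIntegrable_const
    (intervalIntegrable_deriv_deriv hf)]
  simp only [sub_self, zero_smul, neg_one_smul, intervalIntegral.integral_neg, hintegral_deriv]
  abel

theorem mul_sq_div_two_le_integral_sub_mul {g : ℝ → ℝ} {m : ℝ} (hab : a ≤ b)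
    (hg : IntervalIntegrable g MeasureTheory.volume a b) (hm : ∀ t ∈ Icc a b, m ≤ g t) :
    m * ((b - a) ^ 2 / 2) ≤ ∫ t in a..b, (b - t) * g t := by
  calc m * ((b - a) ^ 2 / 2) = ∫ t in a..b, (b - t) * m := by
        rw [intervalIntegral.integral_mul_const,
          intervalIntegral.integral_comp_sub_left (fun t => t)]
        simp [mul_comm]
    _ ≤ ∫ t in a..b, (b - t) * g t :=
        intervalIntegral.integral_mono_on hab (Continuous.intervalIntegrable (by fun_prop) _ _)
          (hg.continuousOn_mul (by fun_prop))
          fun t ht => mul_le_mul_of_nonneg_left (hm t ht) (sub_nonneg.2 ht.2)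

end TaylorRemainder

theorem contDiffAt_KLdiv {n : ℕ} {m : WithTop ℕ∞} {x q : Fin n → ℝ} (hx : ∀ i, x i ≠ 0)
    (hq : ∀ i, q i ≠ 0) : ContDiffAt ℝ m (fun y => KLdiv y q) x := by
  refine ContDiffAt.sum fun i _ => ?_
  have hcoord : ContDiffAt ℝ m (fun y : Fin n → ℝ => y i) x := contDiffAt_apply ..
  exact hcoord.mul ((hcoord.div_const (q i)).log (div_ne_zero (hx i) (hq i)))

section Coordinates

variable {d : ℕ} {F : (Fin d → ℝ) → ℝ} {θ : Fin d → ℝ}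

theorem fderiv_apply_eq_sum_pd (v : Fin d → ℝ) :
    fderiv ℝ F θ v = ∑ k, pd F k θ * v k := by
  calc fderiv ℝ F θ v = fderiv ℝ F θ (∑ k, v k • Pi.single k 1) := by
        rw [← pi_eq_sum_univ' v]
    _ = ∑ k, pd F k θ * v k := by
        simp only [map_sum, map_smul, smul_eq_mul, pd, mul_comm]

theorem pd_pd_eq_fderiv_fderiv (hF : DifferentiableAt ℝ (fderiv ℝ F) θ) (a b : Fin d) :
    pd (pd F b) a θ = fderiv ℝ (fderiv ℝ F) θ (Pi.single a 1) (Pi.single b 1) := by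
  change fderiv ℝ (fun y => fderiv ℝ F y (Pi.single b 1)) θ (Pi.single a 1) = _
  simp [fderiv_clm_apply hF (differentiableAt_const _)]

theorem fderiv_fderiv_apply_eq_dotProduct_hess (hF : DifferentiableAt ℝ (fderiv ℝ F) θ)
    (v w : Fin d → ℝ) : fderiv ℝ (fderiv ℝ F) θ v w = v ⬝ᵥ hess F θ *ᵥ w := by
  let B : (Fin d → ℝ) →ₗ[ℝ] (Fin d → ℝ) →ₗ[ℝ] ℝ :=
    ContinuousLinearMap.toLinearMap₁₂ (fderiv ℝ (fderiv ℝ F) θ)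
  have hB : LinearMap.toMatrix₂' ℝ B = hess F θ := by
    ext a b
    exact (LinearMap.toMatrix₂'_apply B a b).trans (pd_pd_eq_fderiv_fderiv hF a b).symm
  rw [← hB, ← toLinearMap₂'_apply', toLinearMap₂'_toMatrix']
  rfl

/-- The covariant Hessian `∇²F - ∑ₖ ∂ₖF Γᵏ` of a function `F` on parameter space, for the affine
connection with Christoffel symbols `Γ k θ i j = Γᵏᵢⱼ(θ)`. It generalizes `HW` from the
Kullback–Leibler divergence and the Levi-Civita connection of `GW`. -/
def covHess (F : (Fin d → ℝ) → ℝ) (Γ : Fin d → (Fin d → ℝ) → Matrix (Fin d) (Fin d) ℝ)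
    (θ : Fin d → ℝ) : Matrix (Fin d) (Fin d) ℝ :=
  hess F θ - ∑ k, pd F k θ • Γ k θ

/-- The geodesic equation of the affine connection with Christoffel symbols `Γ`, for the curve `γ`
at time `t`. It is written with the coordinates of `γ̇`, as in `IsGeodesicOn`. -/
def GeodesicEqAt (Γ : Fin d → (Fin d → ℝ) → Matrix (Fin d) (Fin d) ℝ) (γ : ℝ → Fin d → ℝ)
    (t : ℝ) : Prop :=
  ∀ k, deriv (fun s => deriv γ s k) t + ∑ i, ∑ j, Γ k (γ t) i j * deriv γ t i * deriv γ t j = 0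

variable {Γ : Fin d → (Fin d → ℝ) → Matrix (Fin d) (Fin d) ℝ} {γ : ℝ → Fin d → ℝ} {t : ℝ}

theorem dotProduct_covHess_mulVec (v w : Fin d → ℝ) :
    v ⬝ᵥ covHess F Γ θ *ᵥ w = v ⬝ᵥ hess F θ *ᵥ w - ∑ k, pd F k θ * (v ⬝ᵥ Γ k θ *ᵥ w) := by
  simp only [covHess, sub_mulVec, sum_mulVec, smul_mulVec, dotProduct_sub, dotProduct_sum,
    dotProduct_smul, smul_eq_mul]

theorem GeodesicEqAt.deriv_deriv_apply (hgeo : GeodesicEqAt Γ γ t)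
    (hγ' : DifferentiableAt ℝ (deriv γ) t) (k : Fin d) :
    deriv (deriv γ) t k = -(deriv γ t ⬝ᵥ Γ k (γ t) *ᵥ deriv γ t) := by
  have hquad : deriv γ t ⬝ᵥ Γ k (γ t) *ᵥ deriv γ t =
      ∑ i, ∑ j, Γ k (γ t) i j * deriv γ t i * deriv γ t j := by
    simp only [dotProduct, mulVec, Finset.mul_sum, mul_left_comm, mul_assoc]
  rw [hquad, deriv_pi (differentiableAt_pi.1 hγ')]
  exact eq_neg_of_add_eq_zero_left (hgeo k)

theorem GeodesicEqAt.deriv_deriv_comp_eq_covHess (hgeo : GeodesicEqAt Γ γ t)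
    (hF : ContDiffAt ℝ 2 F (γ t)) (hγ : ContDiffAt ℝ 2 γ t) :
    deriv (deriv (F ∘ γ)) t = deriv γ t ⬝ᵥ covHess F Γ (γ t) *ᵥ deriv γ t := by
  rw [deriv_deriv_comp hF hγ,
    fderiv_fderiv_apply_eq_dotProduct_hess (differentiableAt_fderiv hF),
    fderiv_apply_eq_sum_pd, dotProduct_covHess_mulVec]
  simp only [hgeo.deriv_deriv_apply (differentiableAt_deriv hγ), mul_neg, Finset.sum_neg_distrib,
    sub_eq_add_neg]

theorem taylor_geodesic_bound_general {G : (Fin d → ℝ) → Matrix (Fin d) (Fin d) ℝ} {κ c : ℝ}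
    (hF : ∀ t ∈ Icc (0 : ℝ) 1, ContDiffAt ℝ 2 F (γ t))
    (hγ : ∀ t ∈ Icc (0 : ℝ) 1, ContDiffAt ℝ 2 γ t)
    (hgeo : ∀ t ∈ Icc (0 : ℝ) 1, GeodesicEqAt Γ γ t)
    (hhess : ∀ t ∈ Icc (0 : ℝ) 1, matGE (covHess F Γ (γ t)) (κ • G (γ t)))
    (hspeed : ∀ t ∈ Icc (0 : ℝ) 1, deriv γ t ⬝ᵥ G (γ t) *ᵥ deriv γ t = c) :
    (κ / 2 * c ≤ ∫ t in (0 : ℝ)..1, (1 - t) * deriv (deriv (F ∘ γ)) t) ∧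
      F (γ 0) + deriv (F ∘ γ) 0 + κ / 2 * c ≤ F (γ 1) := by
  have hsmooth : ∀ t ∈ uIcc (0 : ℝ) 1, ContDiffAt ℝ 2 (F ∘ γ) t := by
    rw [uIcc_of_le zero_le_one]
    exact fun t ht => (hF t ht).comp t (hγ t ht)
  have hconvex : ∀ t ∈ Icc (0 : ℝ) 1, κ * c ≤ deriv (deriv (F ∘ γ)) t := fun t ht => by
    simpa only [(hgeo t ht).deriv_deriv_comp_eq_covHess (hF t ht) (hγ t ht), smul_mulVec,
      dotProduct_smul, smul_eq_mul, hspeed t ht] using hhess t ht (deriv γ t)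
  have hremainder : κ / 2 * c ≤ ∫ t in (0 : ℝ)..1, (1 - t) * deriv (deriv (F ∘ γ)) t := by
    linarith [mul_sq_div_two_le_integral_sub_mul zero_le_one
      (intervalIntegrable_deriv_deriv hsmooth) hconvex]
  have htaylor := integral_sub_smul_deriv_deriv hsmooth
  simp only [smul_eq_mul, Function.comp_apply] at htaylor
  exact ⟨hremainder, by linarith⟩

end Coordinates

/-- Under the covariant Hessian bound `H_W ⪰ κ G_W` on `Θ`, for any
constant-speed geodesic `γ` with constant energy `g_W(θ̇,θ̇) = d_W(θ₀,θ₁)²` one has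
`∫₀¹ (1−t) d²/dt² D_KL(p(γ_t)‖q) dt ≥ (κ/2) d_W(θ₀,θ₁)²`, and hence by a second-order
Taylor expansion
`D_KL(p(θ₁)‖q) ≥ D_KL(p(θ₀)‖q) + d/dt|₀ D_KL(p(γ_t)‖q) + (κ/2) d_W(θ₀,θ₁)²`. -/
theorem taylor_geodesic_bound {n d : ℕ} (ω : Fin n → Fin n → ℝ)
    (hω : isWeight ω) (hconn : isConn ω)
    (S : Set (Fin d → ℝ))
    (p : (Fin d → ℝ) → Fin n → ℝ) (hp : ContDiff ℝ 2 p)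
    (hpos : ∀ θ ∈ S, posProb (p θ))
    (hrank : ∀ θ ∈ S, (Jac p θ).rank = d)
    (hpd : ∀ θ ∈ S, (GW ω p θ).PosDef)
    (hGW : ∀ i j, ContDiff ℝ 1 (fun θ => GW ω p θ i j))
    (q : Fin n → ℝ) (hq : posProb q)
    (κ : ℝ) (hhess : ∀ θ ∈ S, matGE (HW ω p q θ) (κ • GW ω p θ))
    (γ : ℝ → Fin d → ℝ) (hgeo : IsGeodesicOn ω p S γ)
    (henergy : ∀ t ∈ Icc (0 : ℝ) 1,
      deriv γ t ⬝ᵥ (GW ω p (γ t)).mulVec (deriv γ t) = dW2 ω p S (γ 0) (γ 1)) :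
    (κ / 2 * dW2 ω p S (γ 0) (γ 1)
        ≤ ∫ t in (0 : ℝ)..1,
            (1 - t) * deriv (fun s => deriv (fun u => KLdiv (p (γ u)) q) s) t) ∧
      KLdiv (p (γ 0)) q + deriv (fun s => KLdiv (p (γ s)) q) 0
          + κ / 2 * dW2 ω p S (γ 0) (γ 1)
        ≤ KLdiv (p (γ 1)) q := by
  have hKL : ∀ t ∈ Icc (0 : ℝ) 1, ContDiffAt ℝ 2 (fun θ => KLdiv (p θ) q) (γ t) := fun t ht =>
    (contDiffAt_KLdiv (fun i => ((hpos _ (hgeo.2.1 t ht)).1 i).ne') fun i => (hq.1 i).ne').comp _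
      hp.contDiffAt
  exact taylor_geodesic_bound_general (F := fun θ => KLdiv (p θ) q) hKL
    (fun _ _ => hgeo.1.contDiffAt) hgeo.2.2 (fun t ht => hhess _ (hgeo.2.1 t ht)) henergy

end
end StatRicci
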